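/- arXiv:1410.3889 — 2 statements merged into one kernel-verified Lean document; each statement's English description precedes it below -/
import Mathlib

section
/- There exists a universal constant c > 0 such that the following holds. Let V be a finite set with |V| = n ≥ 2 and distinguished distinct vertices s, t ∈ V, let cap, dem : V × V → ℝ≥0 be symmetric functions vanishing on the diagonal, and let d be an st-separating semi-metric on V with Σ_{u,v∈V} dem(u,v)·d(u,v) > 0. Then there exists an st-separating cut (S, V∖S) with Σ_{u∈S,v∈V∖S} dem(u,v) > 0 and sparsity sp(S) ≤ c·(log n)·(Σ_{u,v∈V} cap(u,v)·d(u,v)) / (Σ_{u,v∈V} dem(u,v)·d(u,v)). (This is the mathematical content of the O(log n)-approximation for st-SparsestCut.) -/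
/-!
If `g` is minimal at `s` and maximal at `t`, every threshold between `g s` and `g t` cuts `V`
into two parts separating `s` from `t`, and `|g u - g v|` is the measure of the thresholds at
which `u` and `v` are cut. Averaging over the threshold, some `st`-separating cut has
sparsity at most the quotient of the total lengths of `|g u - g v|` under the capacities and
under the demands.

A semi-metric `d` is turned into such a `g` by Bourgain's random distance functions. For
`0 < 2 r ≤ d(u, v)`, the balls of radius `r` about `u` and `v` are disjoint; let `B` be the
larger one. A random set of density about `1 / |B|` meets `B` and misses the other ball with
constant probability, and then `r` lies between the distances of `u` and `v` to this set.
Integrating over `r` and summing over the `O(log n)` dyadic densities gives a set `A` for which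
`f = d(·, A)` keeps a `1 / O(log n)` fraction of the total demand length. As `d` is
`st`-separating and `f` is `1`-Lipschitz, `d(s, ·) + f` and `d(s, ·) - f` are both minimal at `s`
and maximal at `t`, and one of them has at least the demand length of `f`.
-/

open MeasureTheory ProbabilityTheory Metric Set unitInterval

section Cuts

variable {V : Type*}

/-- `S` is one side of a cut separating `s` from `t`; either side is allowed. -/
def Separates (s t : V) (S : Finset V) : Prop :=
  (s ∈ S ∧ t ∉ S) ∨ (s ∉ S ∧ t ∈ S)

lemma Separates.nonempty {s t : V} {S : Finset V} (h : Separates s t S) : S.Nonempty :=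
  h.elim (fun h => ⟨s, h.1⟩) fun h => ⟨t, h.2⟩

lemma Separates.ne_univ [Fintype V] {s t : V} {S : Finset V} (h : Separates s t S) :
    S ≠ Finset.univ := by
  rintro rfl
  simp [Separates] at h

lemma Separates.compl [Fintype V] [DecidableEq V] {s t : V} {S : Finset V}
    (h : Separates s t S) : Separates s t Sᶜ := by
  simpa [Separates, or_comm] using h

variable [Fintype V]

/-- The total length `∑ w(u, v) δ(u, v)` of a function `δ` of two points, such as a semi-metric,
under the weights `w`, such as capacities or demands. -/
def totalLength (w δ : V → V → ℝ) : ℝ :=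
  ∑ u, ∑ v, w u v * δ u v

/-- The total length, under the weights `w`, of the line semi-metric `|g u - g v|`. -/
def lineLength (w : V → V → ℝ) (g : V → ℝ) : ℝ :=
  totalLength w fun u v => |g u - g v|

lemma totalLength_nonneg {w δ : V → V → ℝ} (hw : ∀ u v, 0 ≤ w u v) (hδ : ∀ u v, 0 ≤ δ u v) :
    0 ≤ totalLength w δ :=
  Finset.sum_nonneg fun u _ => Finset.sum_nonneg fun v _ => mul_nonneg (hw u v) (hδ u v)

lemma totalLength_mono_right {w δ δ' : V → V → ℝ} (hw : ∀ u v, 0 ≤ w u v)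
    (h : ∀ u v, δ u v ≤ δ' u v) : totalLength w δ ≤ totalLength w δ' :=
  Finset.sum_le_sum fun u _ => Finset.sum_le_sum fun v _ =>
    mul_le_mul_of_nonneg_left (h u v) (hw u v)

lemma totalLength_add (w δ δ' : V → V → ℝ) :
    totalLength w (fun u v => δ u v + δ' u v) = totalLength w δ + totalLength w δ' := by
  simp only [totalLength, mul_add, Finset.sum_add_distrib]

lemma totalLength_const_mul (w : V → V → ℝ) (c : ℝ) (δ : V → V → ℝ) :
    totalLength w (fun u v => c * δ u v) = c * totalLength w δ := by
  simp only [totalLength, mul_left_comm _ c, Finset.mul_sum]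

lemma integral_totalLength {Ω : Type*} [MeasurableSpace Ω] {μ : Measure Ω} (w : V → V → ℝ)
    {δ : Ω → V → V → ℝ} (hδ : ∀ u v, Integrable (fun ω => δ ω u v) μ) :
    ∫ ω, totalLength w (δ ω) ∂μ = totalLength w fun u v => ∫ ω, δ ω u v ∂μ := by
  have h_int (u v : V) : Integrable (fun ω => w u v * δ ω u v) μ := (hδ u v).const_mul _
  simp only [totalLength]
  rw [integral_finsetSum _ fun u _ => integrable_finsetSum _ fun v _ => h_int u v]
  refine Finset.sum_congr rfl fun u _ => ?_
  rw [integral_finsetSum _ fun v _ => h_int u v]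
  simp only [integral_const_mul]

lemma lineLength_smul_sub (c : ℝ) (w w' : V → V → ℝ) (g : V → ℝ) :
    lineLength (c • w - w') g = c * lineLength w g - lineLength w' g := by
  simp only [lineLength, totalLength, Pi.sub_apply, Pi.smul_apply, smul_eq_mul, sub_mul, mul_assoc,
    Finset.sum_sub_distrib, Finset.mul_sum]

/-- The strict sublevel set `{g < θ}`, one side of the cut obtained by thresholding `g` at `θ`. -/
noncomputable def sublevel (g : V → ℝ) (θ : ℝ) : Finset V :=
  {v | g v < θ}

lemma mem_sublevel {g : V → ℝ} {θ : ℝ} {v : V} : v ∈ sublevel g θ ↔ g v < θ :=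
  Finset.mem_filter_univ v

variable [DecidableEq V]

/-- The total weight of the ordered pairs leaving `S`, so that `cutWeight cap S / cutWeight dem S`
is the sparsity of the cut `(S, Sᶜ)`. -/
def cutWeight (w : V → V → ℝ) (S : Finset V) : ℝ :=
  ∑ u ∈ S, ∑ v ∈ Sᶜ, w u v

lemma cutWeight_nonneg {w : V → V → ℝ} (hw : ∀ u v, 0 ≤ w u v) (S : Finset V) :
    0 ≤ cutWeight w S :=
  Finset.sum_nonneg fun u _ => Finset.sum_nonneg fun v _ => hw u v

lemma cutWeight_smul_sub (c : ℝ) (w w' : V → V → ℝ) (S : Finset V) :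
    cutWeight (c • w - w') S = c * cutWeight w S - cutWeight w' S := by
  simp only [cutWeight, Pi.sub_apply, Pi.smul_apply, smul_eq_mul, Finset.sum_sub_distrib,
    Finset.mul_sum]

lemma totalLength_indicator_uIoc (w : V → V → ℝ) (g : V → ℝ) (θ : ℝ) :
    totalLength w (fun u v => (uIoc (g u) (g v)).indicator 1 θ) =
      cutWeight w (sublevel g θ) + cutWeight w (sublevel g θ)ᶜ := by
  rw [totalLength, cutWeight, cutWeight, compl_compl, ← Finset.sum_add_sum_compl (sublevel g θ)]
  congr 1 <;> refine Finset.sum_congr rfl fun u hu => ?_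
  · have hu : g u < θ := mem_sublevel.1 hu
    rw [sublevel, Finset.compl_filter, Finset.sum_filter]
    refine Finset.sum_congr rfl fun v _ => ?_
    simp [indicator, mem_uIoc, hu, hu.not_ge]
  · have hu : θ ≤ g u := by simpa [mem_sublevel] using hu
    rw [sublevel, Finset.sum_filter]
    refine Finset.sum_congr rfl fun v _ => ?_
    simp [indicator, mem_uIoc, hu, hu.not_gt]

lemma integral_indicator_uIoc (a b : ℝ) : ∫ θ, (uIoc a b).indicator (1 : ℝ → ℝ) θ = |a - b| := by
  rw [integral_indicator_one measurableSet_uIoc, measureReal_def, Real.volume_uIoc,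
    ENNReal.toReal_ofReal (abs_nonneg _), abs_sub_comm]

lemma lineLength_eq_integral_cutWeight (w : V → V → ℝ) (g : V → ℝ) :
    lineLength w g =
      ∫ θ, (cutWeight w (sublevel g θ) + cutWeight w (sublevel g θ)ᶜ) := by
  have h_int (u v : V) : Integrable ((uIoc (g u) (g v)).indicator (1 : ℝ → ℝ)) :=
    (integrable_indicator_iff measurableSet_uIoc).2 <|
      integrableOn_const (by simp [Real.volume_uIoc])
  simp only [← totalLength_indicator_uIoc, integral_totalLength w h_int, integral_indicator_uIoc,
    lineLength]

lemma exists_separates_cutWeight_pos {s t : V} {w : V → V → ℝ} {g : V → ℝ}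
    (hg : ∀ v, g v ∈ Icc (g s) (g t)) (hpos : 0 < lineLength w g) :
    ∃ S, Separates s t S ∧ 0 < cutWeight w S := by
  contrapose! hpos
  rw [lineLength_eq_integral_cutWeight]
  refine integral_nonpos fun θ => ?_
  rcases le_or_gt θ (g s) with hs | hs
  · have hempty : sublevel g θ = ∅ :=
      Finset.filter_false_of_mem fun v _ => (hs.trans (hg v).1).not_gt
    simp [hempty, cutWeight]
  rcases lt_or_ge (g t) θ with ht | ht
  · have huniv : sublevel g θ = Finset.univ :=
      Finset.filter_true_of_mem fun v _ => (hg v).2.trans_lt ht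
    simp [huniv, cutWeight]
  have hsep : Separates s t (sublevel g θ) :=
    Or.inl ⟨mem_sublevel.2 hs, mem_sublevel.not.2 ht.not_gt⟩
  exact add_nonpos (hpos _ hsep) (hpos _ hsep.compl)

theorem exists_separates_sparsity_le {s t : V} {cap dem : V → V → ℝ}
    (hcap : ∀ u v, 0 ≤ cap u v) (hdem : ∀ u v, 0 ≤ dem u v) {g : V → ℝ}
    (hg : ∀ v, g v ∈ Icc (g s) (g t)) (hpos : 0 < lineLength dem g) :
    ∃ S, Separates s t S ∧ 0 < cutWeight dem S ∧
      cutWeight cap S / cutWeight dem S ≤ lineLength cap g / lineLength dem g := by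
  obtain ⟨S, ⟨hS, hSpos⟩, hmin⟩ :=
    exists_min_image {S | Separates s t S ∧ 0 < cutWeight dem S}
      (fun S => cutWeight cap S / cutWeight dem S) (toFinite _)
      (exists_separates_cutWeight_pos hg hpos)
  refine ⟨S, hS, hSpos, ?_⟩
  set K := cutWeight cap S / cutWeight dem S
  rw [le_div_iff₀ hpos]
  by_contra! hlt
  obtain ⟨R, hR, hRpos⟩ := exists_separates_cutWeight_pos (w := K • dem - cap) hg
    (by rw [lineLength_smul_sub]; linarith)
  rw [cutWeight_smul_sub, sub_pos] at hRpos
  obtain hR0 | hR0 := (cutWeight_nonneg hdem R).eq_or_lt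
  · rw [← hR0, mul_zero] at hRpos
    exact hRpos.not_ge (cutWeight_nonneg hcap R)
  · exact hRpos.not_ge ((le_div_iff₀ hR0).1 (hmin R ⟨hR, hR0⟩))

end Cuts

section LipschitzFunctions

variable {V : Type*} [PseudoMetricSpace V] {s t : V} {f : V → ℝ}

lemma dist_add_mem_Icc (hst : ∀ v, dist s t = dist s v + dist v t) (hf : LipschitzWith 1 f)
    (v : V) : dist s v + f v ∈ Icc (dist s s + f s) (dist s t + f t) := by
  have hs := hf.le_add_mul s v
  have ht := hf.le_add_mul v t
  rw [NNReal.coe_one, one_mul] at hs ht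
  constructor
  · linarith [dist_self s]
  · linarith [hst v]

lemma abs_dist_add_sub_le (s : V) (hf : LipschitzWith 1 f) (u v : V) :
    |(dist s u + f u) - (dist s v + f v)| ≤ 2 * dist u v := by
  have h := ((LipschitzWith.dist_right s).add hf).dist_le_mul u v
  rw [Real.dist_eq] at h
  convert h using 2
  norm_num

lemma exists_mem_Icc_lineLength_le [Fintype V] (hst : ∀ v, dist s t = dist s v + dist v t)
    (hf : LipschitzWith 1 f) {w : V → V → ℝ} (hw : ∀ u v, 0 ≤ w u v) :
    ∃ g : V → ℝ, (∀ v, g v ∈ Icc (g s) (g t)) ∧ (∀ u v, |g u - g v| ≤ 2 * dist u v) ∧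
      lineLength w f ≤ lineLength w g := by
  have hsum : 2 * lineLength w f ≤
      lineLength w (fun v => dist s v + f v) + lineLength w (fun v => dist s v + (-f) v) := by
    simp only [lineLength, ← totalLength_add, ← totalLength_const_mul]
    refine totalLength_mono_right hw fun u v => ?_
    calc 2 * |f u - f v| = |(dist s u + f u - (dist s v + f v)) -
            (dist s u + (-f) u - (dist s v + (-f) v))| := by
          rw [← abs_two, ← abs_mul, Pi.neg_apply, Pi.neg_apply]
          ring_nf
      _ ≤ _ := abs_sub _ _
  obtain h | h : lineLength w f ≤ lineLength w (fun v => dist s v + f v) ∨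
      lineLength w f ≤ lineLength w (fun v => dist s v + (-f) v) := by
    by_contra! h
    linarith
  · exact ⟨_, dist_add_mem_Icc hst hf, abs_dist_add_sub_le s hf, h⟩
  · exact ⟨_, dist_add_mem_Icc hst hf.neg, abs_dist_add_sub_le s hf.neg, h⟩

end LipschitzFunctions

section RandomSubset

variable {ι : Type*}

lemma setBernoulli_univ_real_disjoint (p : I) {U : Set ι} (hU : U.Finite) :
    setBer(univ, p).real {A | Disjoint A U} = (1 - p : ℝ) ^ U.ncard := by
  have hpi : (fun P : ι → Prop => {i | P i}) ⁻¹' {A | Disjoint A U} =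
      (hU.toFinset : Set ι).pi fun _ => {False} := by
    ext P
    simp only [mem_preimage, mem_ofPred_eq, disjoint_right, Finite.coe_toFinset, Set.mem_pi,
      mem_singleton_iff, eq_iff_iff, iff_false]
  rw [measureReal_def, setBernoulli_apply', hpi,
    Measure.infinitePi_pi _ fun _ _ => measurableSet_singleton _]
  simp [ncard_eq_toFinset_card U hU]

lemma setBernoulli_univ_real_disjoint_not_disjoint [Finite ι] (p : I) {U W : Set ι}
    (hUW : Disjoint U W) :
    setBer(univ, p).real {A | Disjoint A U ∧ ¬ Disjoint A W} =
      (1 - p : ℝ) ^ U.ncard * (1 - (1 - p : ℝ) ^ W.ncard) := by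
  have hdiff : {A : Set ι | Disjoint A U ∧ ¬ Disjoint A W} =
      {A | Disjoint A U} \ {A | Disjoint A (U ∪ W)} := by
    ext A
    simp only [mem_ofPred_eq, mem_sdiff, disjoint_union_right]
    tauto
  rw [hdiff, measureReal_sdiff (ofPred_subset_ofPred.2 fun A hA => (disjoint_union_right.1 hA).1)
      .of_discrete,
    setBernoulli_univ_real_disjoint p (toFinite _), setBernoulli_univ_real_disjoint p (toFinite _),
    ncard_union_eq hUW]
  ring

lemma half_le_one_sub_pow {p : ℝ} (hp : p ≤ 1) {a : ℕ} (ha : a * p ≤ 1 / 2) :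
    1 / 2 ≤ (1 - p) ^ a := by
  have := one_add_mul_le_pow (a := -p) (by linarith) a
  rw [← sub_eq_add_neg] at this
  linarith

lemma one_sub_pow_le_four_fifths {p : ℝ} (hp : p ≤ 1) {b : ℕ} (hb : 1 / 4 ≤ b * p) :
    (1 - p) ^ b ≤ 4 / 5 :=
  calc (1 - p) ^ b ≤ Real.exp (-p) ^ b :=
        pow_le_pow_left₀ (sub_nonneg.2 hp) (Real.one_sub_le_exp_neg p) b
    _ = (Real.exp (b * p))⁻¹ := by rw [← Real.exp_nat_mul, mul_neg, Real.exp_neg]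
    _ ≤ (5 / 4)⁻¹ := by gcongr; linarith [Real.add_one_le_exp (b * p)]
    _ = 4 / 5 := by norm_num

lemma one_tenth_le_setBernoulli_univ_real [Finite ι] {p : I} {U W : Set ι} (hUW : Disjoint U W)
    (hU : U.ncard * (p : ℝ) ≤ 1 / 2) (hW : 1 / 4 ≤ W.ncard * (p : ℝ)) :
    1 / 10 ≤ setBer(univ, p).real {A | Disjoint A U ∧ ¬ Disjoint A W} := by
  rw [setBernoulli_univ_real_disjoint_not_disjoint p hUW]
  have hmiss := half_le_one_sub_pow p.2.2 hU
  have hhit := one_sub_pow_le_four_fifths p.2.2 hW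
  nlinarith

end RandomSubset

section Thresholds

variable {Ω : Type*} [MeasurableSpace Ω] {μ : Measure Ω} {X Y : Ω → ℝ}

lemma lintegral_measure_uIoc [SFinite μ] (hX : Measurable X) (hY : Measurable Y) :
    ∫⁻ θ, μ {ω | θ ∈ uIoc (X ω) (Y ω)} = ∫⁻ ω, ENNReal.ofReal |X ω - Y ω| ∂μ := by
  have hmeas : MeasurableSet {q : Ω × ℝ | q.2 ∈ uIoc (X q.1) (Y q.1)} := by
    simp only [mem_uIoc]
    measurability
  have h := (Measure.prod_apply_symm (μ := μ) (ν := volume) hmeas).symm.trans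
    (Measure.prod_apply hmeas)
  simpa [preimage, Real.volume_uIoc, abs_sub_comm] using h

lemma mul_le_integral_abs_sub_of_le_measureReal_uIoc [SFinite μ] (hX : Measurable X)
    (hY : Measurable Y) (hXY : Integrable (fun ω => |X ω - Y ω|) μ) {a b c : ℝ} (hc : 0 ≤ c)
    (h : ∀ θ ∈ Ioc a b, c ≤ μ.real {ω | θ ∈ uIoc (X ω) (Y ω)}) :
    c * (b - a) ≤ ∫ ω, |X ω - Y ω| ∂μ := by
  have hnn : 0 ≤ ∫ ω, |X ω - Y ω| ∂μ := integral_nonneg fun ω => abs_nonneg _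
  rw [← ENNReal.ofReal_le_ofReal_iff hnn, ofReal_integral_eq_lintegral_ofReal hXY
    (.of_forall fun ω => abs_nonneg _), ← lintegral_measure_uIoc hX hY]
  calc ENNReal.ofReal (c * (b - a)) = ∫⁻ _ in Ioc a b, ENNReal.ofReal c := by
        rw [setLIntegral_const, Real.volume_Ioc, ENNReal.ofReal_mul hc]
    _ ≤ ∫⁻ θ in Ioc a b, μ {ω | θ ∈ uIoc (X ω) (Y ω)} :=
        setLIntegral_mono' measurableSet_Ioc fun θ hθ => ENNReal.ofReal_le_of_le_toReal (h θ hθ)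
    _ ≤ ∫⁻ θ, μ {ω | θ ∈ uIoc (X ω) (Y ω)} := setLIntegral_le_lintegral _ _

end Thresholds

section Bourgain

variable {V : Type*}

/-- The density `2⁻ʲ / 4` of the random sets at scale `j`. The factor `1 / 4` makes a set of at most
`2 ^ (j + 1)` points missed with probability at least `1 / 2`. -/
noncomputable def dyadicProb (j : ℕ) : I :=
  ⟨(2 ^ (j + 2))⁻¹, by positivity, inv_le_one_of_one_le₀ (one_le_pow₀ one_le_two)⟩

variable (V) in
/-- The measure behind Bourgain's embedding: the sum, over all dyadic scales up to `|V|`, of the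
laws of the random subsets of `V` of density `dyadicProb j`. It is not normalised, so that its
mass counts the scales. -/
noncomputable def bourgainMeasure : Measure (Set V) :=
  ∑ j ∈ Finset.range (Nat.log 2 (Nat.card V) + 1), setBer(univ, dyadicProb j)

instance : IsFiniteMeasure (bourgainMeasure V) := by
  unfold bourgainMeasure; infer_instance

variable (V) in
lemma bourgainMeasure_real_univ :
    (bourgainMeasure V).real univ = (Nat.log 2 (Nat.card V) + 1 : ℕ) := by
  rw [measureReal_def, bourgainMeasure, Measure.finsetSum_apply]
  simp [-Nat.cast_add]

variable [PseudoMetricSpace V]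

lemma mem_uIoc_infDist {A : Set V} {u v : V} {r : ℝ} (hu : Disjoint A (ball u r))
    (hv : ¬ Disjoint A (ball v r)) : r ∈ uIoc (infDist u A) (infDist v A) := by
  obtain ⟨a, haA, hav⟩ := not_disjoint_iff.1 hv
  refine mem_uIoc.2 (Or.inr ⟨?_, ?_⟩)
  · exact (infDist_le_dist_of_mem haA).trans_lt (mem_ball'.1 hav)
  · refine (le_infDist ⟨a, haA⟩).2 fun b hb => ?_
    simpa [dist_comm] using disjoint_left.1 hu hb

variable [Finite V]

lemma one_tenth_le_bourgainMeasure_real {u v : V} {r : ℝ} (hr : 0 < r) (huv : r + r ≤ dist u v) :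
    1 / 10 ≤ (bourgainMeasure V).real {A | r ∈ uIoc (infDist u A) (infDist v A)} := by
  wlog hle : (ball u r).ncard ≤ (ball v r).ncard generalizing u v
  · simpa only [uIoc_comm] using this (dist_comm u v ▸ huv) (le_of_not_ge hle)
  set j := Nat.log 2 (ball v r).ncard
  have hmem : j ∈ Finset.range (Nat.log 2 (Nat.card V) + 1) :=
    Finset.mem_range_succ_iff.2 (Nat.log_mono_right (ncard_le_card _))
  have hvpos : (ball v r).ncard ≠ 0 := ncard_ne_zero_of_mem (mem_ball_self hr)
  have hv : (2 : ℝ) ^ j ≤ (ball v r).ncard := mod_cast Nat.pow_log_le_self 2 hvpos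
  have hu : ((ball u r).ncard : ℝ) ≤ 2 ^ (j + 1) :=
    mod_cast hle.trans (Nat.lt_pow_succ_log_self one_lt_two _).le
  calc 1 / 10 ≤ setBer(univ, dyadicProb j).real
        {A | Disjoint A (ball u r) ∧ ¬ Disjoint A (ball v r)} := by
        refine one_tenth_le_setBernoulli_univ_real (ball_disjoint_ball huv) ?_ ?_
        · rw [dyadicProb, ← div_eq_mul_inv, div_le_iff₀ (by positivity)]
          exact hu.trans_eq (by ring)
        · rw [dyadicProb, ← div_eq_mul_inv, le_div_iff₀ (by positivity)]
          exact hv.trans_eq' (by ring)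
    _ ≤ setBer(univ, dyadicProb j).real {A | r ∈ uIoc (infDist u A) (infDist v A)} :=
        measureReal_mono fun A hA => mem_uIoc_infDist hA.1 hA.2
    _ ≤ (bourgainMeasure V).real {A | r ∈ uIoc (infDist u A) (infDist v A)} := by
        refine ENNReal.toReal_mono (measure_ne_top _ _) ?_
        rw [bourgainMeasure, Measure.finsetSum_apply]
        exact Finset.single_le_sum_of_canonicallyOrdered (f := fun j => setBer(univ, dyadicProb j)
          {A | r ∈ uIoc (infDist u A) (infDist v A)}) hmem

theorem dist_div_twenty_le_integral (u v : V) :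
    dist u v / 20 ≤ ∫ A, |infDist u A - infDist v A| ∂bourgainMeasure V := by
  calc dist u v / 20 = 1 / 10 * (dist u v / 2 - 0) := by ring
    _ ≤ _ := mul_le_integral_abs_sub_of_le_measureReal_uIoc .of_discrete .of_discrete .of_finite
      (by norm_num) fun r hr =>
        one_tenth_le_bourgainMeasure_real hr.1 (by linarith [hr.2])

end Bourgain

theorem exists_totalLength_dist_le {V : Type*} [PseudoMetricSpace V] [Fintype V]
    {w : V → V → ℝ} (hw : ∀ u v, 0 ≤ w u v) :
    ∃ A : Set V, totalLength w dist ≤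
      20 * (Nat.log 2 (Nat.card V) + 1 : ℕ) * lineLength w (infDist · A) := by
  have hμ : bourgainMeasure V ≠ 0 := fun h => by
    have huniv := bourgainMeasure_real_univ V
    rw [h, measureReal_zero_apply] at huniv
    exact Nat.cast_ne_zero.2 (Nat.succ_ne_zero _) huniv.symm
  obtain ⟨A, hA⟩ := exists_average_le (f := fun A => lineLength w (infDist · A)) hμ .of_finite
  rw [average_eq, bourgainMeasure_real_univ, smul_eq_mul, inv_mul_le_iff₀ (by positivity)] at hA
  refine ⟨A, ?_⟩
  calc totalLength w dist
      ≤ totalLength w fun u v => 20 * ∫ A, |infDist u A - infDist v A| ∂bourgainMeasure V :=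
        totalLength_mono_right hw fun u v => by linarith [dist_div_twenty_le_integral u v]
    _ = 20 * ∫ A, lineLength w (infDist · A) ∂bourgainMeasure V := by
        rw [totalLength_const_mul, ← integral_totalLength w fun _ _ => .of_finite]
        rfl
    _ ≤ _ := by rw [mul_assoc]; gcongr

lemma natLog_two_add_one_le_three_mul_log {n : ℕ} (hn : 2 ≤ n) :
    ((Nat.log 2 n + 1 : ℕ) : ℝ) ≤ 3 * Real.log n := by
  have hfloor : (Nat.log 2 n : ℝ) ≤ Real.log n / Real.log 2 := Real.natLog_le_logb n 2
  have hone : (1 : ℝ) ≤ Nat.log 2 n := mod_cast Nat.log_pos one_lt_two hn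
  rw [le_div_iff₀ (Real.log_pos one_lt_two)] at hfloor
  push_cast
  nlinarith [Real.log_two_gt_d9]

theorem stmt6_general {V : Type*} [Fintype V] [DecidableEq V] [PseudoMetricSpace V] {s t : V}
    (hst : ∀ v, dist s t = dist s v + dist v t) {cap dem : V → V → ℝ}
    (hcap : ∀ u v, 0 ≤ cap u v) (hdem : ∀ u v, 0 ≤ dem u v) (hpos : 0 < totalLength dem dist) :
    ∃ S, Separates s t S ∧ 0 < cutWeight dem S ∧
      cutWeight cap S / cutWeight dem S ≤
        120 * Real.log (Fintype.card V) * (totalLength cap dist / totalLength dem dist) := by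
  have hcard : 2 ≤ Fintype.card V := by
    rw [Nat.succ_le_iff, Fintype.one_lt_card_iff_nontrivial]
    by_contra h
    have hsub := not_nontrivial_iff_subsingleton.1 h
    simp [totalLength, Subsingleton.elim _ s] at hpos
  have hlog : 0 < Real.log (Fintype.card V) := Real.log_pos (by exact_mod_cast hcard)
  obtain ⟨A, hA⟩ := exists_totalLength_dist_le hdem
  obtain ⟨g, hg, hg_lip, hg_dem⟩ :=
    exists_mem_Icc_lineLength_le hst (lipschitz_infDist_pt A) hdem
  have hdem_le : totalLength dem dist ≤ 60 * Real.log (Fintype.card V) * lineLength dem g :=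
    calc _ ≤ _ := hA
      _ ≤ 20 * (3 * Real.log (Fintype.card V)) * lineLength dem g := by
        rw [Nat.card_eq_fintype_card]
        gcongr
        · exact totalLength_nonneg hdem fun _ _ => abs_nonneg _
        · exact natLog_two_add_one_le_three_mul_log hcard
      _ = _ := by ring
  have hcap_le : lineLength cap g ≤ 2 * totalLength cap dist :=
    (totalLength_mono_right hcap hg_lip).trans_eq (totalLength_const_mul ..)
  have hg_pos : 0 < lineLength dem g := pos_of_mul_pos_right (hpos.trans_le hdem_le) (by positivity)
  obtain ⟨S, hS, hS_dem, hS_le⟩ := exists_separates_sparsity_le hcap hdem hg hg_pos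
  refine ⟨S, hS, hS_dem, hS_le.trans ?_⟩
  rw [mul_div_assoc', div_le_div_iff₀ hg_pos hpos]
  calc lineLength cap g * totalLength dem dist
      ≤ 2 * totalLength cap dist * (60 * Real.log (Fintype.card V) * lineLength dem g) := by
        gcongr
        exact mul_nonneg two_pos.le (totalLength_nonneg hcap fun _ _ => dist_nonneg)
    _ = _ := by ring

/-- Mathematical content of Theorem 3.1 (`thm_lr`, the `O(log n)`-approximation
for `st`-SparsestCut): there is a universal constant `c > 0` such that for any
`st`-separating semi-metric `d` of positive demand-weighted total length on an
`n`-point set (`n ≥ 2`), there is an `st`-separating cut of positive demand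
whose sparsity is at most `c · log n` times the ratio
`(Σ cap·d)/(Σ dem·d)`. -/
theorem stmt6 : ∃ c : ℝ, 0 < c ∧
    ∀ (V : Type) [Fintype V] [DecidableEq V] (s t : V), s ≠ t →
    2 ≤ Fintype.card V →
    ∀ (cap dem : V → V → ℝ),
    (∀ u v, 0 ≤ cap u v) → (∀ u v, 0 ≤ dem u v) →
    (∀ u v, cap u v = cap v u) → (∀ u v, dem u v = dem v u) →
    (∀ v, cap v v = 0) → (∀ v, dem v v = 0) →
    ∀ (d : V → V → ℝ),
    (∀ u v, 0 ≤ d u v) → (∀ u v, d u v = d v u) → (∀ v, d v v = 0) →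
    (∀ u v w, d u v ≤ d u w + d w v) →
    (∀ v, d s t = d s v + d v t) →
    (0 < ∑ u, ∑ v, dem u v * d u v) →
    ∃ S : Finset V, S.Nonempty ∧ S ≠ Finset.univ ∧
      ((s ∈ S ∧ t ∉ S) ∨ (s ∉ S ∧ t ∈ S)) ∧
      (0 < ∑ u ∈ S, ∑ v ∈ Sᶜ, dem u v) ∧
      (∑ u ∈ S, ∑ v ∈ Sᶜ, cap u v) / (∑ u ∈ S, ∑ v ∈ Sᶜ, dem u v) ≤
        c * Real.log (Fintype.card V) *
          ((∑ u, ∑ v, cap u v * d u v) / (∑ u, ∑ v, dem u v * d u v)) := by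
  refine ⟨120, by norm_num, fun V _ _ s t _ _ cap dem hcap hdem _ _ _ _ d _ hsymm hself htri hst
    hpos => ?_⟩
  let _ : PseudoMetricSpace V :=
    { dist := d
      dist_self := hself
      dist_comm := hsymm
      dist_triangle := fun u v w => htri u w v }
  obtain ⟨S, hS, hS_dem, hS_le⟩ := stmt6_general hst hcap hdem hpos
  exact ⟨S, hS.nonempty, hS.ne_univ, hS, hS_dem, hS_le⟩
end

section
/- Let V be a finite set with distinguished distinct vertices s, t ∈ V, let cap, dem : V × V → ℝ≥0 be symmetric functions vanishing on the diagonal, let T > 0, and let h : V → ℝ be a map with h(v) ∈ [−T/3, 4T/3] for all v ∈ V, h(s) = 0, and h(t) = T. Then there exists α ∈ {1/3, 1} such that the map h' = F_{α,T} ∘ h satisfies: h'(v) ∈ [0, T] for all v ∈ V, h'(s) = 0, h'(t) = T, Σ_{u,v∈V} dem(u,v)·|h'(u) − h'(v)| ≥ (1/6)·Σ_{u,v∈V} dem(u,v)·|h(u) − h(v)|, and Σ_{u,v∈V} cap(u,v)·|h'(u) − h'(v)| ≤ Σ_{u,v∈V} cap(u,v)·|h(u) − h(v)|. -/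
/-- The flip map `F_{α,T}` of Step 2 of Lemma 4.5. -/
noncomputable def flipMap (α T x : ℝ) : ℝ :=
  if T < x then T - α * (x - T) else if x < 0 then -α * x else x

/-!
Reflecting the overshoot of `x` beyond `[0, T]` with slope `α` gives
`F_α x = (1 + α) c(x) - α x`, where `c` is the projection onto `[0, T]`. Since `c` is monotone and
nonexpansive, `F_α` is nonexpansive for `0 ≤ α ≤ 1`, so capacity-weighted lengths do not grow.
Eliminating `c` between two slopes leaves `(1 + β) F_α x - (1 + α) F_β x = (β - α) x`, so `F_α` and
`F_β` cannot both shrink a difference by much: a weighted length of `h` is controlled by those of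
`F_α ∘ h` and `F_β ∘ h` together, hence by the larger of them. For the slopes `1/3` and `1` this
gives the factor `1/5`.
-/

section FlipMap

variable {α β T x : ℝ}

theorem flipMap_of_mem_Icc (hx : x ∈ Set.Icc 0 T) : flipMap α T x = x := by
  rw [flipMap, if_neg hx.2.not_gt, if_neg hx.1.not_gt]

theorem flipMap_mem_Icc (hα₀ : 0 ≤ α) (hα₁ : α ≤ 1) (hx : x ∈ Set.Icc (-T) (2 * T)) :
    flipMap α T x ∈ Set.Icc 0 T := by
  obtain ⟨hTx, hxT⟩ := hx
  unfold flipMap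
  split_ifs <;> constructor <;> nlinarith

theorem flipMap_eq_clamp (hT : 0 ≤ T) (α x : ℝ) :
    flipMap α T x = (1 + α) * max 0 (min T x) - α * x := by
  unfold flipMap
  split_ifs with hTx hx
  · rw [min_eq_left hTx.le, max_eq_right hT]
    ring
  · rw [min_eq_right (hx.le.trans hT), max_eq_left hx.le]
    ring
  · rw [min_eq_right (not_lt.1 hTx), max_eq_right (not_lt.1 hx)]
    ring

theorem lipschitzWith_flipMap (hT : 0 ≤ T) (hα₀ : 0 ≤ α) (hα₁ : α ≤ 1) :
    LipschitzWith 1 (flipMap α T) := by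
  refine LipschitzWith.of_le_add fun x y => ?_
  rw [flipMap_eq_clamp hT, flipMap_eq_clamp hT, Real.dist_eq]
  have clamp_mono : Monotone fun z : ℝ => max 0 (min T z) :=
    monotone_const.max (monotone_const.min monotone_id)
  have clamp_lipschitz : LipschitzWith 1 fun z : ℝ => max 0 (min T z) :=
    (LipschitzWith.id.const_min T).const_max 0
  rcases le_total x y with hxy | hyx
  · have hc : max 0 (min T x) ≤ max 0 (min T y) := clamp_mono hxy
    rw [abs_of_nonpos (sub_nonpos.2 hxy)]
    nlinarith
  · have hc : max 0 (min T x) ≤ max 0 (min T y) + dist x y := by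
      simpa only [NNReal.coe_one, one_mul] using clamp_lipschitz.le_add_mul x y
    rw [Real.dist_eq, abs_of_nonneg (sub_nonneg.2 hyx)] at hc
    rw [abs_of_nonneg (sub_nonneg.2 hyx)]
    nlinarith

theorem mul_flipMap_sub_mul_flipMap (α β T x : ℝ) :
    (1 + β) * flipMap α T x - (1 + α) * flipMap β T x = (β - α) * x := by
  unfold flipMap
  split_ifs <;> ring

theorem abs_sub_mul_abs_sub_le_flipMap (hα : -1 ≤ α) (hβ : -1 ≤ β) (T x y : ℝ) :
    |β - α| * |x - y| ≤ (1 + β) * |flipMap α T x - flipMap α T y| +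
      (1 + α) * |flipMap β T x - flipMap β T y| := by
  have hα' : 0 ≤ 1 + α := by linarith
  have hβ' : 0 ≤ 1 + β := by linarith
  calc |β - α| * |x - y|
      = |(1 + β) * (flipMap α T x - flipMap α T y) -
          (1 + α) * (flipMap β T x - flipMap β T y)| := by
        rw [← abs_mul]
        congr 1
        linear_combination
          mul_flipMap_sub_mul_flipMap α β T y - mul_flipMap_sub_mul_flipMap α β T x
    _ ≤ |(1 + β) * (flipMap α T x - flipMap α T y)| +
          |(1 + α) * (flipMap β T x - flipMap β T y)| := abs_sub _ _
    _ = _ := by rw [abs_mul, abs_mul, abs_of_nonneg hα', abs_of_nonneg hβ']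

end FlipMap

section WeightedLength

variable {V : Type*} [Fintype V] {w : V → V → ℝ} {α β : ℝ}

/-- The total length of the line embedding `f`, the pair `(u, v)` counting with weight `w u v`: the
common form of the demand and capacity sums. Pairs are ordered, so each unordered pair occurs
twice. -/
def weightedLength (w : V → V → ℝ) (f : V → ℝ) : ℝ :=
  ∑ u, ∑ v, w u v * |f u - f v|

theorem weightedLength_nonneg (hw : ∀ u v, 0 ≤ w u v) (f : V → ℝ) : 0 ≤ weightedLength w f :=
  Finset.sum_nonneg fun u _ => Finset.sum_nonneg fun v _ => mul_nonneg (hw u v) (abs_nonneg _)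

theorem weightedLength_comp_le (hw : ∀ u v, 0 ≤ w u v) {φ : ℝ → ℝ} (hφ : LipschitzWith 1 φ)
    (f : V → ℝ) : weightedLength w (φ ∘ f) ≤ weightedLength w f := by
  refine Finset.sum_le_sum fun u _ => Finset.sum_le_sum fun v _ =>
    mul_le_mul_of_nonneg_left ?_ (hw u v)
  simpa only [Real.dist_eq, NNReal.coe_one, one_mul, Function.comp_apply] using
    hφ.dist_le_mul (f u) (f v)

theorem abs_sub_mul_weightedLength_le_flipMap (hw : ∀ u v, 0 ≤ w u v) (hα : -1 ≤ α)
    (hβ : -1 ≤ β) (T : ℝ) (f : V → ℝ) :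
    |β - α| * weightedLength w f ≤ (1 + β) * weightedLength w (flipMap α T ∘ f) +
      (1 + α) * weightedLength w (flipMap β T ∘ f) := by
  simp only [weightedLength, Finset.mul_sum, ← Finset.sum_add_distrib]
  refine Finset.sum_le_sum fun u _ => Finset.sum_le_sum fun v _ => ?_
  have hpair := mul_le_mul_of_nonneg_left
    (abs_sub_mul_abs_sub_le_flipMap hα hβ T (f u) (f v)) (hw u v)
  simp only [Function.comp_apply]
  linarith

theorem exists_mul_weightedLength_le_flipMap (hw : ∀ u v, 0 ≤ w u v) (hα : -1 < α)
    (hβ : -1 < β) (T : ℝ) (f : V → ℝ) :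
    ∃ γ, (γ = α ∨ γ = β) ∧
      |β - α| / (2 + α + β) * weightedLength w f ≤ weightedLength w (flipMap γ T ∘ f) := by
  have hpos : 0 < 2 + α + β := by linarith
  have hsum := abs_sub_mul_weightedLength_le_flipMap hw hα.le hβ.le T f
  simp only [div_mul_eq_mul_div, div_le_iff₀ hpos]
  rcases le_total (weightedLength w (flipMap α T ∘ f)) (weightedLength w (flipMap β T ∘ f))
    with hle | hle
  · exact ⟨β, .inr rfl, by nlinarith⟩
  · exact ⟨α, .inl rfl, by nlinarith⟩

end WeightedLength

theorem stmt17_general {V : Type*} [Fintype V] {s t : V} {cap dem : V → V → ℝ}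
    (hcap : ∀ u v, 0 ≤ cap u v) (hdem : ∀ u v, 0 ≤ dem u v) {T : ℝ} (hT : 0 ≤ T)
    {h : V → ℝ} (hrange : ∀ v, h v ∈ Set.Icc (-T) (2 * T)) (hs : h s = 0) (ht : h t = T)
    {α β : ℝ} (hα : α ∈ Set.Icc 0 1) (hβ : β ∈ Set.Icc 0 1) :
    ∃ γ, (γ = α ∨ γ = β) ∧
      (∀ v, flipMap γ T (h v) ∈ Set.Icc 0 T) ∧
      flipMap γ T (h s) = 0 ∧
      flipMap γ T (h t) = T ∧
      |β - α| / (2 + α + β) * weightedLength dem h ≤ weightedLength dem (flipMap γ T ∘ h) ∧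
      weightedLength cap (flipMap γ T ∘ h) ≤ weightedLength cap h := by
  obtain ⟨γ, hγ, hlength⟩ := exists_mul_weightedLength_le_flipMap hdem
    (neg_one_lt_zero.trans_le hα.1) (neg_one_lt_zero.trans_le hβ.1) T h
  obtain ⟨hγ₀, hγ₁⟩ : γ ∈ Set.Icc 0 1 := by rcases hγ with rfl | rfl <;> assumption
  refine ⟨γ, hγ, fun v => flipMap_mem_Icc hγ₀ hγ₁ (hrange v), ?_, ?_, hlength,
    weightedLength_comp_le hcap (lipschitzWith_flipMap hT hγ₀ hγ₁) h⟩
  · rw [hs, flipMap_of_mem_Icc (Set.left_mem_Icc.2 hT)]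
  · rw [ht, flipMap_of_mem_Icc (Set.right_mem_Icc.2 hT)]

/-- Step 2 (flipping) of Lemma 4.5: given `h : V → [−T/3, 4T/3]` with
`h(s) = 0` and `h(t) = T`, some `α ∈ {1/3, 1}` yields `h' = F_{α,T} ∘ h`
confined to `[0, T]`, still with `h'(s) = 0`, `h'(t) = T`, losing at most a
factor `6` in the demand-weighted lengths and not increasing the
capacity-weighted lengths. -/
theorem stmt17 {V : Type*} [Fintype V] [DecidableEq V] (s t : V) (hst : s ≠ t)
    (cap dem : V → V → ℝ)
    (hcap0 : ∀ u v, 0 ≤ cap u v) (hdem0 : ∀ u v, 0 ≤ dem u v)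
    (hcapsym : ∀ u v, cap u v = cap v u) (hdemsym : ∀ u v, dem u v = dem v u)
    (hcapdiag : ∀ v, cap v v = 0) (hdemdiag : ∀ v, dem v v = 0)
    (T : ℝ) (hT : 0 < T)
    (h : V → ℝ) (hrange : ∀ v, h v ∈ Set.Icc (-(T / 3)) (4 * T / 3))
    (hs : h s = 0) (ht : h t = T) :
    ∃ α : ℝ, (α = 1 / 3 ∨ α = 1) ∧
      (∀ v, flipMap α T (h v) ∈ Set.Icc (0 : ℝ) T) ∧
      flipMap α T (h s) = 0 ∧
      flipMap α T (h t) = T ∧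
      (1 / 6) * ∑ u, ∑ v, dem u v * |h u - h v| ≤
        ∑ u, ∑ v, dem u v * |flipMap α T (h u) - flipMap α T (h v)| ∧
      ∑ u, ∑ v, cap u v * |flipMap α T (h u) - flipMap α T (h v)| ≤
        ∑ u, ∑ v, cap u v * |h u - h v| := by
  obtain ⟨α, hα, hIcc, hs', ht', hdem, hcap⟩ := stmt17_general hcap0 hdem0 hT.le
    (fun v => Set.Icc_subset_Icc (by linarith) (by linarith) (hrange v)) hs ht
    (α := 1 / 3) (β := 1) (by norm_num) (by norm_num)
  have hfactor : (1 : ℝ) / 6 ≤ |1 - 1 / 3| / (2 + 1 / 3 + 1) := by norm_num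
  exact ⟨α, hα, hIcc, hs', ht',
    (mul_le_mul_of_nonneg_right hfactor (weightedLength_nonneg hdem0 h)).trans hdem, hcap⟩
end
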